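/- There exists a function f ∈ C²(G∖{0}) that is a Lyapunov function for the Skorohod problem (G,d) with respect to the set C₁ (i.e. properties (a),(b),(d) hold and property (c) holds with a single constant c > 0 valid simultaneously for every r₀ ∈ C₁), and f is radially linear on G, i.e. f(sx) = s f(x) for all s > 0 and x ∈ G. -/

import Mathlib

open MeasureTheory Set Metric Filter Topology RealInnerProductSpace
open scoped Classical ENNReal

noncomputable section

abbrev Evec (n : ℕ) : Type := EuclideanSpace ℝ (Fin n)

variable {n N : ℕ}

/-- The cone generated by the vectors `v i`, `i ∈ lam`. -/
def coneGen (v : Fin N → Evec n) (lam : Set (Fin N)) : Set (Evec n) :=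
  {y | ∃ c : Fin N → ℝ, (∀ i, 0 ≤ c i) ∧ (∀ i, i ∉ lam → c i = 0) ∧ y = ∑ i, c i • v i}

/-- The polyhedral cone `G = ⋂ i {x : ⟨x, n_i⟩ ≥ 0}`. -/
def Gset (nv : Fin N → Evec n) : Set (Evec n) :=
  {x | ∀ i, 0 ≤ ⟪x, nv i⟫}

/-- `In(x) = {i : ⟨x, n_i⟩ = 0}`. -/
def inIdx (nv : Fin N → Evec n) (x : Evec n) : Set (Fin N) :=
  {i | ⟪x, nv i⟫ = 0}

/-- The constraint directions `d(x) = cone{d_i, i ∈ In(x)} ∩ S^{n-1}`. -/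
def dDir (nv dv : Fin N → Evec n) (x : Evec n) : Set (Evec n) :=
  coneGen dv (inIdx nv x) ∩ sphere (0 : Evec n) 1

/-- The set of inward normals to `G` at `x`. -/
def nSet (nv : Fin N → Evec n) (x : Evec n) : Set (Evec n) :=
  {ν | ‖ν‖ = 1 ∧ ∀ y ∈ Gset nv, ⟪ν, x - y⟫ ≤ 0}

/-- The origin is a proper vertex of `G`. -/
def ProperVertex (nv : Fin N → Evec n) : Prop :=
  ∃ a0 : Evec n, ‖a0‖ = 1 ∧ IsCompact {x : Evec n | x ∈ Gset nv ∧ ⟪x, a0⟫ ≤ 1}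

/-- Condition 2.1 (existence form). -/
def Cond21 (nv dv : Fin N → Evec n) : Prop :=
  ∀ lam : Set (Fin N), lam.Nonempty →
    ∃ dl ∈ coneGen dv lam, ∀ i ∈ lam, 0 < ⟪dl, nv i⟫

/-- Condition 2.1 with a fixed choice `d^λ = dlam λ` for each nonempty `λ`. -/
def Cond21At (nv dv : Fin N → Evec n) (dlam : Set (Fin N) → Evec n) : Prop :=
  ∀ lam : Set (Fin N), lam.Nonempty →
    dlam lam ∈ coneGen dv lam ∧ ∀ i ∈ lam, 0 < ⟪dlam lam, nv i⟫

/-- The cone `C = cone{-d_i, i = 1,…,N}`. -/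
def Cset (dv : Fin N → Evec n) : Set (Evec n) :=
  coneGen (fun i => -dv i) Set.univ

/-- Right continuous with left limits on `[0,∞)`. -/
def Cadlag (f : ℝ → Evec n) : Prop :=
  (∀ t : ℝ, 0 ≤ t → ContinuousWithinAt f (Ici t) t) ∧
  ∀ t : ℝ, 0 < t → ∃ l : Evec n, Tendsto f (𝓝[<] t) (𝓝 l)

/-- `(φ, η)` solves the Skorohod problem for `ψ` with respect to `(G, d)`. -/
structure SPsol (nv dv : Fin N → Evec n) (ψ φ η : ℝ → Evec n) : Prop where
  init : φ 0 = ψ 0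
  decomp : ∀ t : ℝ, 0 ≤ t → φ t = ψ t + η t
  memG : ∀ t : ℝ, 0 ≤ t → φ t ∈ Gset nv
  finVar : ∀ t : ℝ, 0 ≤ t → eVariationOn η (Icc 0 t) ≠ ⊤
  varMeasure : ∃ μ : Measure ℝ,
    (∀ t : ℝ, 0 ≤ t → μ (Icc 0 t) = eVariationOn η (Icc 0 t)) ∧
    (∀ t : ℝ, 0 ≤ t → μ (Icc 0 t) = μ {s | s ∈ Icc 0 t ∧ φ s ∈ frontier (Gset nv)}) ∧
    ∃ γ : ℝ → Evec n, Measurable γ ∧ (∀ᵐ s ∂μ, γ s ∈ dDir nv dv (φ s)) ∧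
      ∀ t : ℝ, 0 ≤ t → η t = ∫ s in Icc 0 t, γ s ∂μ

/-- Condition 2.2: the Skorohod map `Γ` is well defined on all cadlag paths starting
in `G` (existence and uniqueness of solutions of the SP) and is Lipschitz with
constant `ℓ` in the uniform metric. -/
def Cond22 (nv dv : Fin N → Evec n) (Γ : (ℝ → Evec n) → ℝ → Evec n) (ℓ : ℝ) : Prop :=
  (∀ ψ, Cadlag ψ → ψ 0 ∈ Gset nv → ∃ η, SPsol nv dv ψ (Γ ψ) η) ∧
  (∀ ψ φ₁ η₁ φ₂ η₂, Cadlag ψ → ψ 0 ∈ Gset nv →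
      SPsol nv dv ψ φ₁ η₁ → SPsol nv dv ψ φ₂ η₂ → ∀ t : ℝ, 0 ≤ t → φ₁ t = φ₂ t) ∧
  ∀ ψ₁ ψ₂, Cadlag ψ₁ → ψ₁ 0 ∈ Gset nv → Cadlag ψ₂ → ψ₂ 0 ∈ Gset nv →
    ∀ M : ℝ, (∀ t : ℝ, 0 ≤ t → ‖ψ₁ t - ψ₂ t‖ ≤ M) →
      ∀ t : ℝ, 0 ≤ t → ‖Γ ψ₁ t - Γ ψ₂ t‖ ≤ ℓ * M

/-- The face `F_i = ∂G ∩ ∂G_i`. -/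
def Fface (nv : Fin N → Evec n) (i : Fin N) : Set (Evec n) :=
  frontier (Gset nv) ∩ frontier {x : Evec n | 0 ≤ ⟪x, nv i⟫}

/-- `v(β,x) = β` on `G`, `= d^{λ(x)}` off `G`, with `λ(x) = {i : ⟨x,n_i⟩ ≤ 0}`. -/
def vRaw (nv : Fin N → Evec n) (dlam : Set (Fin N) → Evec n) (β x : Evec n) : Evec n :=
  if x ∈ Gset nv then β else dlam {i | ⟪x, nv i⟫ ≤ 0}

/-- The mollified field `v^a(β,x)`. -/
def vMoll (nv : Fin N → Evec n) (dlam : Set (Fin N) → Evec n) (ρ : Evec n → ℝ)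
    (a : ℝ) (β x : Evec n) : Evec n :=
  ((a * ‖x‖) ^ n)⁻¹ • ∫ y : Evec n, ρ ((a * ‖x‖)⁻¹ • (x - y)) • vRaw nv dlam β y

/-- The fields `v_i^a(β,x)`, `i = 0,1,…,N` (index `0` is `v_0^a`). -/
def vA (nv dv : Fin N → Evec n) (dlam : Set (Fin N) → Evec n) (ρ : Evec n → ℝ)
    (g : ℝ → ℝ) (a : ℝ) (β x : Evec n) : Fin (N + 1) → Evec n := fun i =>
  if x = 0 then 0 else
    (Fin.cons
      (g (infDist x (Gset nv) / (a * ‖x‖)) • β +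
        (1 - g (infDist x (Gset nv) / (a * ‖x‖))) • vMoll nv dlam ρ a β x)
      (fun j : Fin N =>
        g (infDist x (Fface nv j) / (a * ‖x‖)) • dv j +
          (1 - g (infDist x (Fface nv j) / (a * ‖x‖))) • vMoll nv dlam ρ a β x) :
      Fin (N + 1) → Evec n) i

/-- `K^a(β,x) = conv{v_i^a(β,x) : i = 0,…,N}`. -/
def KaB (nv dv : Fin N → Evec n) (dlam : Set (Fin N) → Evec n) (ρ : Evec n → ℝ)
    (g : ℝ → ℝ) (a : ℝ) (β x : Evec n) : Set (Evec n) :=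
  convexHull ℝ (Set.range (vA nv dv dlam ρ g a β x))

/-- `K^a(x) = ⋃_{β ∈ C₁} K^a(β,x)`. -/
def Ka (nv dv : Fin N → Evec n) (dlam : Set (Fin N) → Evec n) (ρ : Evec n → ℝ)
    (g : ℝ → ℝ) (C1 : Set (Evec n)) (a : ℝ) (x : Evec n) : Set (Evec n) :=
  ⋃ β ∈ C1, KaB nv dv dlam ρ g a β x

/-- `φ` is an absolutely continuous solution on `[0,∞)` of the differential
inclusion `φ' ∈ K(φ)`. -/
def DIsol (K : Evec n → Set (Evec n)) (φ : ℝ → Evec n) : Prop :=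
  ∃ φ' : ℝ → Evec n,
    (∀ t : ℝ, 0 ≤ t → IntegrableOn φ' (Icc 0 t)) ∧
    (∀ t : ℝ, 0 ≤ t → φ t = φ 0 + ∫ s in Icc 0 t, φ' s) ∧
    ∀ᵐ s ∂(volume.restrict (Ici (0 : ℝ))), φ' s ∈ K (φ s)

/-- `V^a(x)`, as an extended nonnegative real. -/
def VfunE (nv dv : Fin N → Evec n) (dlam : Set (Fin N) → Evec n) (ρ : Evec n → ℝ)
    (g ηf : ℝ → ℝ) (C1 : Set (Evec n)) (a : ℝ) (x : Evec n) : ℝ≥0∞ :=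
  ⨆ φ : {φ : ℝ → Evec n // φ 0 = x ∧ DIsol (Ka nv dv dlam ρ g C1 a) φ},
    ∫⁻ t in Ici (0 : ℝ), ENNReal.ofReal (ηf ‖φ.1 t‖)

/-- `V^a(x)` as a real number. -/
def Vfun (nv dv : Fin N → Evec n) (dlam : Set (Fin N) → Evec n) (ρ : Evec n → ℝ)
    (g ηf : ℝ → ℝ) (C1 : Set (Evec n)) (a : ℝ) (x : Evec n) : ℝ :=
  (VfunE nv dv dlam ρ g ηf C1 a x).toReal

/-- The limit set `K(x)` of the sets `K^{a_k}(x_k)` as `a_k → 0`, `x_k → x`. -/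
def Kzero (nv dv : Fin N → Evec n) (dlam : Set (Fin N) → Evec n) (ρ : Evec n → ℝ)
    (g : ℝ → ℝ) (C1 : Set (Evec n)) (x : Evec n) : Set (Evec n) :=
  {v | ∃ (as : ℕ → ℝ) (xs vs : ℕ → Evec n),
    (∀ k, as k ∈ Ioc (0 : ℝ) 1) ∧
    (∀ k, vs k ∈ Ka nv dv dlam ρ g C1 (as k) (xs k)) ∧
    Tendsto as atTop (𝓝 0) ∧ Tendsto xs atTop (𝓝 x) ∧ Tendsto vs atTop (𝓝 v)}

/-- `K̄(x)`, the closed convex hull of `K(x)`. -/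
def Kbar (nv dv : Fin N → Evec n) (dlam : Set (Fin N) → Evec n) (ρ : Evec n → ℝ)
    (g : ℝ → ℝ) (C1 : Set (Evec n)) (x : Evec n) : Set (Evec n) :=
  closure (convexHull ℝ (Kzero nv dv dlam ρ g C1 x))

/-- `δ₀ = inf{⟨d^λ, n_i⟩ : λ nonempty, i ∈ λ}`. -/
def delta0 (nv : Fin N → Evec n) (dlam : Set (Fin N) → Evec n) : ℝ :=
  sInf {r | ∃ (lam : Set (Fin N)) (i : Fin N), lam.Nonempty ∧ i ∈ lam ∧ r = ⟪dlam lam, nv i⟫}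


/-!
The Lyapunov function is a regularization of the largest norm reachable from a point.

Call a sequence of points a *perturbed trajectory* if each step is a move by some `u ∈ C` followed
by a push along directions of constraint at a point of `G` lying within relative distance `ε` of
the landing point. Read as a step path and corrected by jumps of relative size `ε`, such a sequence
solves the Skorohod problem for an input uniformly close to a path with increments in `C` issued
from the origin; the latter is mapped to `0` by the Skorohod map, since each increment can be
cancelled at the origin. The Lipschitz property then bounds every perturbed trajectory from `x` by
`2 ℓ ‖x‖` when `ε = 1 / (4 ℓ)` (`ptraj_bound`). Hence the largest norm `reachSup` reached from `x`
is finite; it is homogeneous of degree one, at least `‖x‖` on `G`, and it does not increase along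
moves in `C`, nor along directions of constraint, even when these are used slightly away from their
face (`reachSup_step`).

Sup-convolution makes this functional Lipschitz (`exists_monotone`), and a mollification of width
`a ‖x‖` makes it smooth away from the origin while keeping homogeneity; monotonicity survives up to
an error `L a ‖v‖` (`exists_mollified`). Let `F` be the result.

Strict decrease comes from two observations. For `r ∈ C₁` the vector `r + (δ / 2) x / ‖x‖` still
lies in `C`, and `DF(x) x = F(x) ≥ ‖x‖ / 2` by homogeneity, so `DF(x) r ≤ - δ / 4` up to small
errors. For the directions of constraint one subtracts `κ ⟨e, x⟩`, with `κ` small and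
`⟨e, d_i⟩ ≥ 1` for all `i`; such an `e` exists because the `d_i` have no nontrivial nonnegative
dependence (`no_dependence`, `exists_dual`). The bounds on the derivatives follow from the Lipschitz
property and from homogeneity.
-/

/-! ### Step paths and the Skorohod problem -/

lemma floor_eventually_right (t : ℝ) (ht : 0 ≤ t) : ∀ᶠ s in 𝓝[≥] t, ⌊s⌋₊ = ⌊t⌋₊ := by
  have h : Ico t (⌊t⌋₊ + 1 : ℝ) ∈ 𝓝[≥] t := Ico_mem_nhdsGE (Nat.lt_floor_add_one t)
  filter_upwards [h] with s hs
  rw [Nat.floor_eq_iff (ht.trans hs.1)]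
  exact ⟨(Nat.floor_le ht).trans hs.1, hs.2⟩

lemma floor_eventually_left (t : ℝ) (ht : 0 < t) : ∀ᶠ s in 𝓝[<] t, ⌊s⌋₊ = ⌈t⌉₊ - 1 := by
  have hc : 1 ≤ ⌈t⌉₊ := Nat.one_le_iff_ne_zero.2 (Nat.ceil_pos.2 ht).ne'
  have hlt : ((⌈t⌉₊ - 1 : ℕ) : ℝ) < t := by
    rw [← Nat.lt_ceil]; omega
  have h : Ioo ((⌈t⌉₊ - 1 : ℕ) : ℝ) t ∈ 𝓝[<] t := Ioo_mem_nhdsLT hlt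
  filter_upwards [h] with s hs
  rw [Nat.floor_eq_iff ((Nat.cast_nonneg _).trans hs.1.le)]
  refine ⟨hs.1.le, hs.2.trans_le ?_⟩
  have := Nat.le_ceil t
  push_cast [Nat.cast_sub hc]
  linarith

lemma cadlag_floor (q : ℕ → Evec n) : Cadlag (fun t : ℝ => q ⌊t⌋₊) := by
  constructor
  · intro t ht
    refine (tendsto_const_nhds (x := q ⌊t⌋₊)).congr' ?_
    filter_upwards [floor_eventually_right t ht] with s hs
    rw [hs]
  · intro t ht
    refine ⟨q (⌈t⌉₊ - 1), (tendsto_const_nhds).congr' ?_⟩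
    filter_upwards [floor_eventually_left t ht] with s hs
    rw [hs]

/-- The variation on `[0, t]` of a path with jump `h k` at time `k + 1`. -/
lemma eVariationOn_floor (h : ℕ → Evec n) (t : ℝ) (ht : 0 ≤ t) :
    eVariationOn (fun s : ℝ => ∑ j ∈ Finset.range ⌊s⌋₊, h j) (Icc 0 t) =
      ∑ j ∈ Finset.range ⌊t⌋₊, ENNReal.ofReal ‖h j‖ := by
  set S : ℝ → ℝ := fun s => ∑ j ∈ Finset.range ⌊s⌋₊, ‖h j‖ with hS
  have hmono : Monotone S := fun a b hab =>
    Finset.sum_le_sum_of_subset_of_nonneg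
      (Finset.range_mono (Nat.floor_mono hab)) fun _ _ _ => norm_nonneg _
  apply le_antisymm
  · have hle : ∀ a b : ℝ, edist (∑ j ∈ Finset.range ⌊a⌋₊, h j) (∑ j ∈ Finset.range ⌊b⌋₊, h j)
        ≤ edist (S a) (S b) := by
      have key : ∀ a b : ℝ, a ≤ b →
          edist (∑ j ∈ Finset.range ⌊a⌋₊, h j) (∑ j ∈ Finset.range ⌊b⌋₊, h j)
            ≤ edist (S a) (S b) := by
        intro a b hab
        rw [edist_dist, edist_dist]
        apply ENNReal.ofReal_le_ofReal
        rw [dist_comm, dist_comm (S a), dist_eq_norm, Real.dist_eq, hS]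
        simp only
        rw [← Finset.sum_Ico_eq_sub _ (Nat.floor_mono hab),
          ← Finset.sum_Ico_eq_sub _ (Nat.floor_mono hab)]
        exact (norm_sum_le _ _).trans (le_abs_self _)
      intro a b
      rcases le_total a b with hab | hab
      · exact key a b hab
      · rw [edist_comm, edist_comm (S a)]; exact key b a hab
    have h1 : eVariationOn (fun s : ℝ => ∑ j ∈ Finset.range ⌊s⌋₊, h j) (Icc 0 t) ≤
        eVariationOn S (Icc 0 t) := by
      apply iSup_mono
      intro p
      exact Finset.sum_le_sum fun i _ => hle _ _
    refine h1.trans ?_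
    have h2 := ((hmono.monotoneOn (Icc 0 t)).eVariationOn_eq (left_mem_Icc.2 ht)
      (right_mem_Icc.2 ht)).le
    rw [inter_self] at h2
    refine h2.trans ?_
    rw [← ENNReal.ofReal_sum_of_nonneg fun _ _ => norm_nonneg _]
    simp [hS]
  · have h3 := eVariationOn.sum_le_of_monotoneOn_Iic
      (f := fun s : ℝ => ∑ j ∈ Finset.range ⌊s⌋₊, h j) (s := Icc 0 t) (n := ⌊t⌋₊)
      (u := fun k : ℕ => (k : ℝ)) (fun a _ b _ hab => Nat.cast_le.2 hab)
      (fun i hi => ⟨Nat.cast_nonneg _, (Nat.le_floor_iff ht).1 hi⟩)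
    refine le_trans (le_of_eq ?_) h3
    refine Finset.sum_congr rfl fun i _ => ?_
    rw [edist_dist, dist_eq_norm]
    simp only [Nat.floor_natCast, Finset.sum_range_succ, add_sub_cancel_left]

/-- A point of `G` on some hyperplane `⟨x, n_i⟩ = 0` is a boundary point of `G`. -/
lemma mem_frontier_G (nv : Fin N → Evec n) (hnv : ∀ i, ‖nv i‖ = 1) {x : Evec n}
    (hx : x ∈ Gset nv) {i : Fin N} (hi : i ∈ inIdx nv x) : x ∈ frontier (Gset nv) := by
  refine ⟨subset_closure hx, fun hint => ?_⟩
  have hc : Tendsto (fun s : ℝ => x - s • nv i) (𝓝[>] 0) (𝓝 x) := by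
    have : Continuous fun s : ℝ => x - s • nv i := by fun_prop
    have h0 := this.tendsto 0
    simp only [zero_smul, sub_zero] at h0
    exact h0.mono_left nhdsWithin_le_nhds
  have hev := hc.eventually (isOpen_interior.mem_nhds hint)
  obtain ⟨s, hs, hs0⟩ := (hev.and self_mem_nhdsWithin).exists
  have h1 := interior_subset hs i
  have hi' : ⟪x, nv i⟫ = 0 := hi
  rw [inner_sub_left, inner_smul_left, real_inner_self_eq_norm_sq, hnv, hi'] at h1
  simp at h1
  exact absurd hs0 (not_lt.2 h1)

lemma coneGen_smul {v : Fin N → Evec n} {lam : Set (Fin N)} {x : Evec n} (hx : x ∈ coneGen v lam)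
    {s : ℝ} (hs : 0 ≤ s) : s • x ∈ coneGen v lam := by
  obtain ⟨c, hc, hc', rfl⟩ := hx
  refine ⟨fun i => s * c i, fun i => mul_nonneg hs (hc i), fun i hi => by simp [hc' i hi], ?_⟩
  simp [Finset.smul_sum, smul_smul]

lemma coneGen_zero (v : Fin N → Evec n) (lam : Set (Fin N)) : (0 : Evec n) ∈ coneGen v lam :=
  ⟨fun _ => 0, by simp, by simp, by simp⟩

lemma frontier_of_dDir (nv dv : Fin N → Evec n) (hnv : ∀ i, ‖nv i‖ = 1) {x d : Evec n}
    (hx : x ∈ Gset nv) (hd : d ∈ dDir nv dv x) : x ∈ frontier (Gset nv) := by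
  obtain ⟨⟨c, -, hc', rfl⟩, hd1⟩ := hd
  by_contra hcon
  have hall : ∀ i, c i = 0 := fun i => hc' i fun hi => hcon (mem_frontier_G nv hnv hx hi)
  simp [hall] at hd1

/-- A step path which jumps at the integers, with regulator jumps `h k` in the cone of directions
of constraint at the landing point `y (k + 1)`, solves the Skorohod problem. -/
lemma spsol_step (nv dv : Fin N → Evec n) (hnv : ∀ i, ‖nv i‖ = 1) (y h : ℕ → Evec n)
    (hy : ∀ k, y k ∈ Gset nv) (hh : ∀ k, h k ∈ coneGen dv (inIdx nv (y (k + 1)))) :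
    SPsol nv dv (fun t : ℝ => y ⌊t⌋₊ - ∑ j ∈ Finset.range ⌊t⌋₊, h j) (fun t : ℝ => y ⌊t⌋₊)
      (fun t : ℝ => ∑ j ∈ Finset.range ⌊t⌋₊, h j) := by
  refine ⟨by simp, by simp, fun t _ => hy _, fun t ht => ?_, ?_⟩
  · rw [eVariationOn_floor h t ht]
    exact (ENNReal.sum_lt_top.2 fun _ _ => ENNReal.ofReal_lt_top).ne
  set μ : Measure ℝ :=
    Measure.sum fun k : ℕ => ENNReal.ofReal ‖h k‖ • Measure.dirac ((k + 1 : ℕ) : ℝ) with hμ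
  set γ : ℝ → Evec n := fun s => ‖h (⌈s⌉₊ - 1)‖⁻¹ • h (⌈s⌉₊ - 1) with hγ
  have hγk : ∀ k : ℕ, γ ((k + 1 : ℕ) : ℝ) = ‖h k‖⁻¹ • h k := by
    intro k; simp only [hγ, Nat.ceil_natCast]; simp
  have hae : ∀ᵐ s ∂μ, γ s ∈ dDir nv dv (y ⌊s⌋₊) := by
    rw [hμ, Measure.ae_sum_iff]
    intro k
    rcases eq_or_ne (h k) 0 with h0 | h0
    · simp [h0]
    refine Measure.ae_smul_measure ?_ _
    rw [ae_dirac_eq]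
    change γ _ ∈ dDir nv dv _
    rw [hγk, Nat.floor_natCast]
    refine ⟨coneGen_smul (hh k) (inv_nonneg.2 (norm_nonneg _)), ?_⟩
    rw [mem_sphere_zero_iff_norm, norm_smul, norm_inv, norm_norm,
      inv_mul_cancel₀ (norm_ne_zero_iff.2 h0)]
  have hmem : ∀ (t : ℝ), 0 ≤ t → ∀ k : ℕ, ((k + 1 : ℕ) : ℝ) ∈ Icc 0 t ↔ k ∈ Finset.range ⌊t⌋₊ := by
    intro t ht k
    rw [Finset.mem_range, ← Nat.succ_le_iff, Nat.le_floor_iff ht]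
    exact ⟨fun h => h.2, fun h => ⟨Nat.cast_nonneg _, h⟩⟩
  have hrestrict : ∀ t : ℝ, 0 ≤ t → μ.restrict (Icc 0 t) =
      ∑ k ∈ Finset.range ⌊t⌋₊, ENNReal.ofReal ‖h k‖ • Measure.dirac ((k + 1 : ℕ) : ℝ) := by
    intro t ht
    ext s hs
    rw [Measure.restrict_apply hs, hμ, Measure.sum_apply _ (hs.inter measurableSet_Icc),
      Measure.finsetSum_apply, tsum_eq_sum (s := Finset.range ⌊t⌋₊)]
    · refine Finset.sum_congr rfl fun k hk => ?_
      have := (hmem t ht k).2 hk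
      rw [Measure.smul_apply, Measure.smul_apply, Measure.dirac_apply, Measure.dirac_apply]
      by_cases hks : ((k + 1 : ℕ) : ℝ) ∈ s
      · rw [indicator_of_mem (mem_inter hks this), indicator_of_mem hks]
      · rw [indicator_of_notMem fun h => hks h.1, indicator_of_notMem hks]
    · intro k hk
      rw [Measure.smul_apply, Measure.dirac_apply,
        indicator_of_notMem fun h => hk ((hmem t ht k).1 h.2), smul_zero]
  refine ⟨μ, fun t ht => ?_, fun t _ => ?_, γ, ?_, hae, fun t ht => ?_⟩
  · rw [eVariationOn_floor h t ht, ← Measure.restrict_apply_self, hrestrict t ht,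
      Measure.finsetSum_apply]
    refine Finset.sum_congr rfl fun k hk => ?_
    rw [Measure.smul_apply, Measure.dirac_apply, indicator_of_mem ((hmem t ht k).2 hk)]
    simp
  · refine measure_congr ?_
    filter_upwards [hae] with s hs
    have := frontier_of_dDir nv dv hnv (hy _) hs
    apply propext
    exact ⟨fun h => ⟨h, this⟩, fun h => h.1⟩
  · exact (measurable_from_nat (f := fun k => ‖h (k - 1)‖⁻¹ • h (k - 1))).comp Nat.measurable_ceil
  · rw [hrestrict t ht, integral_finsetSum_measure]
    · refine Finset.sum_congr rfl fun k _ => ?_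
      rw [integral_smul_measure, integral_dirac, hγk, ENNReal.toReal_ofReal (norm_nonneg _)]
      rcases eq_or_ne (h k) 0 with h0 | h0
      · simp [h0]
      · rw [smul_smul, mul_inv_cancel₀ (norm_ne_zero_iff.2 h0), one_smul]
    · intro k _
      exact (integrable_dirac (by simp)).smul_measure ENNReal.ofReal_ne_top

/-! ### Perturbed trajectories and the largest norm they reach -/

/-- `x` lies within relative distance `ε` of `G`. -/
def NearG (nv : Fin N → Evec n) (ε : ℝ) (x : Evec n) : Prop :=
  ∃ y ∈ Gset nv, ‖y - x‖ ≤ ε * ‖x‖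

/-- One step of a perturbed trajectory: a move by some `u ∈ C`, followed by a push `h` along
directions of constraint at a point `y ∈ G` within relative distance `ε` of the landing point. -/
def PStep (nv dv : Fin N → Evec n) (ε : ℝ) (x x' : Evec n) : Prop :=
  ∃ y ∈ Gset nv, ‖y - x'‖ ≤ ε * ‖x'‖ ∧
    ∃ u ∈ Cset dv, ∃ h ∈ coneGen dv (inIdx nv y), x' = x + u + h

/-- `p` is a perturbed trajectory starting at the point `x` near `G`. -/
def PTraj (nv dv : Fin N → Evec n) (ε : ℝ) (x : Evec n) (p : ℕ → Evec n) : Prop :=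
  p 0 = x ∧ NearG nv ε x ∧ ∀ k, PStep nv dv ε (p k) (p (k + 1))

/-- The supremum of the norm over all perturbed trajectories from `x`; since `sSup ∅ = 0`, it
vanishes at points which are not near `G`. -/
def reachSup (nv dv : Fin N → Evec n) (ε : ℝ) (x : Evec n) : ℝ :=
  sSup {r | ∃ p k, PTraj nv dv ε x p ∧ r = ‖p k‖}

lemma zero_mem_G (nv : Fin N → Evec n) : (0 : Evec n) ∈ Gset nv := fun i => by simp

lemma neg_mem_of_Cset {dv : Fin N → Evec n} {u : Evec n} (hu : u ∈ Cset dv) :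
    -u ∈ coneGen dv univ := by
  obtain ⟨c, hc, -, rfl⟩ := hu
  exact ⟨c, hc, by simp, by simp⟩

lemma pstep_self {nv dv : Fin N → Evec n} {ε : ℝ} {x : Evec n} (h : NearG nv ε x) :
    PStep nv dv ε x x := by
  obtain ⟨y, hy, hyx⟩ := h
  exact ⟨y, hy, hyx, 0, coneGen_zero _ _, 0, coneGen_zero _ _, by simp⟩

lemma PTraj.near {nv dv : Fin N → Evec n} {ε : ℝ} {x : Evec n} {p : ℕ → Evec n}
    (hp : PTraj nv dv ε x p) (k : ℕ) : NearG nv ε (p k) := by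
  cases k with
  | zero => rw [hp.1]; exact hp.2.1
  | succ k =>
    obtain ⟨y, hy, hyx, -⟩ := hp.2.2 k
    exact ⟨y, hy, hyx⟩

/-- A path with increments in `C` issued from the origin is mapped to `0` by the Skorohod map; a
perturbed trajectory is uniformly close to a solution for an input which is uniformly close to such
a path. Lipschitz continuity of the Skorohod map then bounds the trajectory. -/
lemma ptraj_bound_aux {nv dv : Fin N → Evec n} (hnv : ∀ i, ‖nv i‖ = 1)
    {Γ : (ℝ → Evec n) → ℝ → Evec n} {ℓ : ℝ} (hΓ : Cond22 nv dv Γ ℓ)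
    {ε : ℝ} (hε : 0 ≤ ε) {x : Evec n} {p : ℕ → Evec n}
    (hp : PTraj nv dv ε x p) {M : ℝ} (hM : ∀ k, ‖p k‖ ≤ M) (k : ℕ) :
    ‖p k‖ ≤ ℓ * (ε * M + ‖x‖) + ε * M := by
  obtain ⟨hΓ1, hΓ2, hΓ3⟩ := hΓ
  obtain ⟨hp0, ⟨y0, hy0, hy0x⟩, hstep⟩ := hp
  choose y hy hyp u hu h hh hpk using hstep
  let Y : ℕ → Evec n := fun k => Nat.casesOn k y0 y
  have hY : ∀ k, Y k ∈ Gset nv := by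
    intro k; cases k with
    | zero => exact hy0
    | succ k => exact hy k
  have hYp : ∀ k, ‖Y k - p k‖ ≤ ε * M := by
    intro k
    refine le_trans ?_ (mul_le_mul_of_nonneg_left (hM k) hε)
    cases k with
    | zero => rw [hp0]; exact hy0x
    | succ k => exact hyp k
  have hsol1 := spsol_step nv dv hnv Y h hY hh
  have hin : ∀ k : ℕ, (-u k) ∈ coneGen dv (inIdx nv ((fun _ => 0 : ℕ → Evec n) (k + 1))) := by
    intro k
    have : inIdx nv (0 : Evec n) = univ := by ext i; simp [inIdx]
    simp only [this]
    exact neg_mem_of_Cset (hu k)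
  have hsol0 := spsol_step nv dv hnv (fun _ => 0) (fun k => -u k) (fun _ => zero_mem_G nv) hin
  set ψ1 : ℝ → Evec n := fun t => Y ⌊t⌋₊ - ∑ j ∈ Finset.range ⌊t⌋₊, h j with hψ1
  set ψ0 : ℝ → Evec n := fun t => 0 - ∑ j ∈ Finset.range ⌊t⌋₊, -u j with hψ0
  have c1 : Cadlag ψ1 := cadlag_floor fun m => Y m - ∑ j ∈ Finset.range m, h j
  have c0 : Cadlag ψ0 := cadlag_floor fun m => 0 - ∑ j ∈ Finset.range m, -u j
  have g1 : ψ1 0 ∈ Gset nv := by simpa [hψ1] using hY 0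
  have g0 : ψ0 0 ∈ Gset nv := by simpa [hψ0] using zero_mem_G nv
  obtain ⟨η1, hη1⟩ := hΓ1 ψ1 c1 g1
  obtain ⟨η0, hη0⟩ := hΓ1 ψ0 c0 g0
  have e1 := hΓ2 ψ1 _ _ _ _ c1 g1 hη1 hsol1
  have e0 := hΓ2 ψ0 _ _ _ _ c0 g0 hη0 hsol0
  have hsum : ∀ m : ℕ, p m = x + ∑ j ∈ Finset.range m, u j + ∑ j ∈ Finset.range m, h j := by
    intro m
    induction m with
    | zero => simp [hp0]
    | succ m ih =>
      rw [hpk m, ih, Finset.sum_range_succ, Finset.sum_range_succ]; abel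
  have hclose : ∀ t : ℝ, 0 ≤ t → ‖ψ1 t - ψ0 t‖ ≤ ε * M + ‖x‖ := by
    intro t _
    have : ψ1 t - ψ0 t = (Y ⌊t⌋₊ - p ⌊t⌋₊) + x := by
      rw [hsum]; simp only [hψ1, hψ0, Finset.sum_neg_distrib]; abel
    rw [this]
    exact (norm_add_le _ _).trans (add_le_add_left (hYp _) _)
  have hfin := hΓ3 ψ1 ψ0 c1 g1 c0 g0 _ hclose k (Nat.cast_nonneg k)
  rw [e1 k (Nat.cast_nonneg k), e0 k (Nat.cast_nonneg k)] at hfin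
  simp only [Nat.floor_natCast, sub_zero] at hfin
  have : p k = Y k - (Y k - p k) := by abel
  rw [this]
  exact (norm_sub_le _ _).trans (add_le_add hfin (hYp k))

/-- The bound of `ptraj_bound_aux` at a maximizing index, where it can be absorbed. -/
lemma ptraj_bound {nv dv : Fin N → Evec n} (hnv : ∀ i, ‖nv i‖ = 1)
    {Γ : (ℝ → Evec n) → ℝ → Evec n} {ℓ : ℝ} (hℓ : 1 ≤ ℓ) (hΓ : Cond22 nv dv Γ ℓ)
    {x : Evec n} {p : ℕ → Evec n}
    (hp : PTraj nv dv (1 / (4 * ℓ)) x p) (k : ℕ) : ‖p k‖ ≤ 2 * ℓ * ‖x‖ := by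
  obtain ⟨m, hm, hmax⟩ := Finset.exists_max_image (Finset.range (k + 1)) (fun j => ‖p j‖)
    ⟨0, by simp⟩
  -- stopping at time `k` makes the trajectory bounded by its largest norm up to then
  have hp' : PTraj nv dv (1 / (4 * ℓ)) x (fun j => p (min j k)) := by
    refine ⟨by simpa using hp.1, hp.2.1, fun j => ?_⟩
    rcases lt_or_ge j k with hj | hj
    · beta_reduce
      rw [min_eq_left hj.le, min_eq_left (Nat.succ_le_of_lt hj)]; exact hp.2.2 j
    · beta_reduce
      rw [min_eq_right hj, min_eq_right (hj.trans (Nat.le_succ j))]; exact pstep_self (hp.near k)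
  have hb := ptraj_bound_aux hnv hΓ (by positivity) hp' (M := ‖p m‖)
    (fun j => hmax _ (by rw [Finset.mem_range]; omega)) m
  have hmk : min m k = m := min_eq_left (Nat.lt_succ_iff.1 (Finset.mem_range.1 hm))
  simp only [hmk] at hb
  have hkm : ‖p k‖ ≤ ‖p m‖ := hmax k (by simp)
  have hℓ0 : 0 < ℓ := by linarith
  have e1 : ℓ * (1 / (4 * ℓ) * ‖p m‖ + ‖x‖) = ‖p m‖ / 4 + ℓ * ‖x‖ := by field_simp
  have e2 : 1 / (4 * ℓ) * ‖p m‖ ≤ ‖p m‖ / 4 := by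
    have : 1 / (4 * ℓ) ≤ 1 / 4 := by
      apply one_div_le_one_div_of_le <;> linarith
    nlinarith [norm_nonneg (p m)]
  linarith

section reach

variable {nv dv : Fin N → Evec n} {ε K : ℝ}

lemma reachSup_bdd (hK : ∀ x p k, PTraj nv dv ε x p → ‖p k‖ ≤ K * ‖x‖) (x : Evec n) :
    BddAbove {r | ∃ p k, PTraj nv dv ε x p ∧ r = ‖p k‖} := by
  refine ⟨K * ‖x‖, ?_⟩
  rintro r ⟨p, k, hp, rfl⟩
  exact hK x p k hp

lemma reachSup_nonneg (x : Evec n) : 0 ≤ reachSup nv dv ε x := by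
  apply Real.sSup_nonneg
  rintro r ⟨p, k, -, rfl⟩
  exact norm_nonneg _

lemma reachSup_le (hK0 : 0 ≤ K) (hK : ∀ x p k, PTraj nv dv ε x p → ‖p k‖ ≤ K * ‖x‖) (x : Evec n) :
    reachSup nv dv ε x ≤ K * ‖x‖ := by
  apply Real.sSup_le _ (by positivity)
  rintro r ⟨p, k, hp, rfl⟩
  exact hK x p k hp

lemma norm_le_reachSup (hK : ∀ x p k, PTraj nv dv ε x p → ‖p k‖ ≤ K * ‖x‖) {x : Evec n}
    (hx : NearG nv ε x) : ‖x‖ ≤ reachSup nv dv ε x :=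
  le_csSup (reachSup_bdd hK x) ⟨fun _ => x, 0, ⟨rfl, hx, fun _ => pstep_self hx⟩, rfl⟩

/-- Prepending a step to a trajectory: `reachSup` does not increase along steps. -/
lemma reachSup_step (hK : ∀ x p k, PTraj nv dv ε x p → ‖p k‖ ≤ K * ‖x‖) {x x' : Evec n}
    (hx : NearG nv ε x) (hs : PStep nv dv ε x x') :
    reachSup nv dv ε x' ≤ reachSup nv dv ε x := by
  apply Real.sSup_le _ (reachSup_nonneg x)
  rintro r ⟨p, k, hp, rfl⟩
  refine le_csSup (reachSup_bdd hK x) ⟨fun j => Nat.casesOn j x p, k + 1, ⟨rfl, hx, ?_⟩, rfl⟩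
  intro j
  cases j with
  | zero => change PStep nv dv ε x (p 0); rw [hp.1]; exact hs
  | succ j => exact hp.2.2 j

lemma inIdx_smul {s : ℝ} (hs : 0 < s) (y : Evec n) : inIdx nv (s • y) = inIdx nv y := by
  ext i; simp [inIdx, inner_smul_left, hs.ne']

lemma G_smul {s : ℝ} (hs : 0 < s) {y : Evec n} (hy : y ∈ Gset nv) : s • y ∈ Gset nv := by
  intro i
  rw [inner_smul_left]
  exact mul_nonneg (by simpa using hs.le) (hy i)

lemma near_smul {s : ℝ} (hs : 0 < s) {y x : Evec n} (h : ‖y - x‖ ≤ ε * ‖x‖) :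
    ‖s • y - s • x‖ ≤ ε * ‖s • x‖ := by
  rw [← smul_sub, norm_smul, norm_smul, Real.norm_of_nonneg hs.le]
  nlinarith

lemma PTraj.smul {s : ℝ} (hs : 0 < s) {x : Evec n} {p : ℕ → Evec n} (hp : PTraj nv dv ε x p) :
    PTraj nv dv ε (s • x) (fun k => s • p k) := by
  obtain ⟨h0, ⟨y, hy, hyx⟩, hst⟩ := hp
  refine ⟨by simp [h0], ⟨s • y, G_smul hs hy, near_smul hs hyx⟩, fun k => ?_⟩
  obtain ⟨y, hy, hyx, u, hu, h, hh, he⟩ := hst k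
  refine ⟨s • y, G_smul hs hy, near_smul hs hyx, s • u, coneGen_smul hu hs.le, s • h, ?_, ?_⟩
  · rw [inIdx_smul hs]; exact coneGen_smul hh hs.le
  · beta_reduce
    rw [he, smul_add, smul_add]

lemma reachSup_smul (hK : ∀ x p k, PTraj nv dv ε x p → ‖p k‖ ≤ K * ‖x‖) {s : ℝ} (hs : 0 < s)
    (x : Evec n) : reachSup nv dv ε (s • x) = s * reachSup nv dv ε x := by
  have key : ∀ {s : ℝ}, 0 < s → ∀ x, s * reachSup nv dv ε x ≤ reachSup nv dv ε (s • x) := by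
    intro s hs x
    rw [← le_div_iff₀' hs]
    apply Real.sSup_le _ (div_nonneg (reachSup_nonneg _) hs.le)
    rintro r ⟨p, k, hp, rfl⟩
    rw [le_div_iff₀' hs]
    refine le_csSup (reachSup_bdd hK _) ⟨_, k, hp.smul hs, ?_⟩
    rw [norm_smul, Real.norm_of_nonneg hs.le]
  refine le_antisymm ?_ (key hs x)
  have h := key (inv_pos.2 hs) (s • x)
  rw [smul_smul, inv_mul_cancel₀ hs.ne', one_smul, inv_mul_le_iff₀ hs] at h
  exact h

end reach

/-! ### Lipschitz regularization by sup-convolution -/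

/-- The sup-convolution of `V` with the cone `-L ‖·‖`. -/
def supConv (V : Evec n → ℝ) (L : ℝ) (x : Evec n) : ℝ := ⨆ y, (V y - L * ‖x - y‖)

section supConv

variable {V : Evec n → ℝ} {K L : ℝ}

lemma supConv_bdd (hK0 : 0 ≤ K) (hVK : ∀ x, V x ≤ K * ‖x‖) (hL : K ≤ L) (x : Evec n) :
    BddAbove (range fun y => V y - L * ‖x - y‖) := by
  refine ⟨K * ‖x‖, ?_⟩
  rintro r ⟨y, rfl⟩
  have h1 : ‖y‖ ≤ ‖x‖ + ‖x - y‖ := by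
    have := norm_sub_le x (x - y)
    rwa [sub_sub_cancel] at this
  have h2 := mul_le_mul_of_nonneg_left h1 hK0
  have h3 := mul_le_mul_of_nonneg_right hL (norm_nonneg (x - y))
  have := hVK y
  simp only
  linarith

lemma le_supConv (hK0 : 0 ≤ K) (hVK : ∀ x, V x ≤ K * ‖x‖) (hL : K ≤ L) (x y : Evec n) :
    V y - L * ‖x - y‖ ≤ supConv V L x :=
  le_ciSup (supConv_bdd hK0 hVK hL x) y

lemma self_le_supConv (hK0 : 0 ≤ K) (hVK : ∀ x, V x ≤ K * ‖x‖) (hL : K ≤ L) (x : Evec n) :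
    V x ≤ supConv V L x := by
  simpa using le_supConv hK0 hVK hL x x

lemma supConv_lip (hK0 : 0 ≤ K) (hVK : ∀ x, V x ≤ K * ‖x‖) (hL : K ≤ L) (x y : Evec n) :
    supConv V L x ≤ supConv V L y + L * ‖x - y‖ := by
  apply ciSup_le
  intro z
  have h1 := le_supConv hK0 hVK hL y z
  have h2 : ‖y - z‖ ≤ ‖x - y‖ + ‖x - z‖ := by
    rw [norm_sub_rev x y]
    simpa using norm_sub_le_norm_sub_add_norm_sub y x z
  have := mul_le_mul_of_nonneg_left h2 (hK0.trans hL)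
  linarith

lemma supConv_smul (hK0 : 0 ≤ K) (hVK : ∀ x, V x ≤ K * ‖x‖) (hL : K ≤ L)
    (hV : ∀ s : ℝ, 0 < s → ∀ x, V (s • x) = s * V x) {s : ℝ} (hs : 0 < s) (x : Evec n) :
    supConv V L (s • x) = s * supConv V L x := by
  have key : ∀ {s : ℝ}, 0 < s → ∀ x, s * supConv V L x ≤ supConv V L (s • x) := by
    intro s hs x
    rw [← le_div_iff₀' hs]
    apply ciSup_le
    intro y
    rw [le_div_iff₀' hs]
    refine le_trans (le_of_eq ?_) (le_supConv hK0 hVK hL (s • x) (s • y))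
    rw [hV s hs, ← smul_sub, norm_smul, Real.norm_of_nonneg hs.le]
    ring
  refine le_antisymm ?_ (key hs x)
  have h := key (inv_pos.2 hs) (s • x)
  rw [smul_smul, inv_mul_cancel₀ hs.ne', one_smul, inv_mul_le_iff₀ hs] at h
  exact h

/-- Near `x0` only nearby points compete in the supremum defining the sup-convolution, hence
monotonicity of `V` in the direction `v` near `x0` passes to the sup-convolution. -/
lemma supConv_mono (hK0 : 0 ≤ K) (hV0 : ∀ x, 0 ≤ V x) (hVK : ∀ x, V x ≤ K * ‖x‖)
    {ε : ℝ} (hε : 0 < ε) (hε2 : ε ≤ 1 / 2) {x0 v : Evec n}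
    (hmono : ∀ y, ‖y - x0‖ ≤ 4 * ε * ‖x0‖ → ‖y + v - x0‖ ≤ 4 * ε * ‖x0‖ → V (y + v) ≤ V y)
    (hv : ‖v‖ ≤ ε * ‖x0‖) {x : Evec n} (hx : ‖x - x0‖ ≤ ε * ‖x0‖) :
    supConv V (K + K / ε) (x + v) ≤ supConv V (K + K / ε) x := by
  have hL : K ≤ K + K / ε := by have := div_nonneg hK0 hε.le; linarith
  apply ciSup_le
  intro y
  obtain ⟨z, rfl⟩ : ∃ z, y = z + v := ⟨y - v, by abel⟩
  have e1 : x + v - (z + v) = x - z := by abel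
  rw [e1]
  have hεx : 0 ≤ ε * ‖x0‖ := by positivity
  rcases le_or_gt ‖x - z‖ (2 * ε * ‖x0‖) with hnear | hfar
  · refine le_trans ?_ (le_supConv hK0 hVK hL x z)
    have h1 : ‖z - x0‖ ≤ 3 * ε * ‖x0‖ := by
      have := norm_sub_le_norm_sub_add_norm_sub z x x0
      rw [norm_sub_rev z x] at this
      linarith
    have h2 : ‖z + v - x0‖ ≤ 4 * ε * ‖x0‖ := by
      have e : z + v - x0 = (z - x0) + v := by abel
      rw [e]
      have := norm_add_le (z - x0) v
      linarith
    have := hmono z (by linarith) h2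
    linarith
  · refine le_trans ?_ ((hV0 x).trans (self_le_supConv hK0 hVK hL x))
    have h1 : ‖z + v‖ ≤ ‖x0‖ + 2 * (ε * ‖x0‖) + ‖x - z‖ := by
      have e : z + v = x0 + (x - x0) - (x - z) + v := by abel
      have t1 := norm_add_le (x0 + (x - x0) - (x - z)) v
      have t2 := norm_sub_le (x0 + (x - x0)) (x - z)
      have t3 := norm_add_le x0 (x - x0)
      rw [← e] at t1
      linarith
    have h2 := (hVK (z + v)).trans (mul_le_mul_of_nonneg_left h1 hK0)
    have h3 : K / ε * (2 * ε * ‖x0‖) ≤ K / ε * ‖x - z‖ :=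
      mul_le_mul_of_nonneg_left hfar.le (by positivity)
    have h4 : K / ε * (2 * ε * ‖x0‖) = 2 * (K * ‖x0‖) := by field_simp
    have h5 : ε * (K * ‖x0‖) ≤ 1 / 2 * (K * ‖x0‖) :=
      mul_le_mul_of_nonneg_right hε2 (by positivity)
    linarith

end supConv

/-! ### Scale-invariant mollification -/

/-- The mollification `F x = ∫ ρ(t) W(x - ‖x‖ t) dt`, whose width at `x` is proportional to `‖x‖`,
keeps homogeneity; as `F x = ‖x‖ (ρ ⋆ W)(x / ‖x‖)`, it is smooth away from the origin. -/
lemma exists_mollified {W : Evec n → ℝ} {L : ℝ} (hL0 : 0 ≤ L)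
    (hlip : ∀ x y, W x ≤ W y + L * ‖x - y‖)
    (hW : ∀ s : ℝ, 0 < s → ∀ x, W (s • x) = s * W x) {a : ℝ} (ha : 0 < a) :
    ∃ F : Evec n → ℝ,
      (∀ x, x ≠ 0 → ContDiffAt ℝ 2 F x) ∧
      (∀ s : ℝ, 0 < s → ∀ x, F (s • x) = s * F x) ∧
      (∀ x y, F x ≤ F y + L * (1 + a) * ‖x - y‖) ∧
      (∀ x, W x - L * a * ‖x‖ ≤ F x) ∧
      (∀ x v, (∀ t, ‖t‖ ≤ a → W (x - ‖x‖ • t + v) ≤ W (x - ‖x‖ • t)) →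
        F (x + v) ≤ F x + L * a * ‖v‖) := by
  have hWlip : LipschitzWith (Real.toNNReal L) W := by
    apply LipschitzWith.of_le_add_mul
    intro x y
    rw [Real.coe_toNNReal L hL0, dist_eq_norm]
    exact hlip x y
  have hWc : Continuous W := hWlip.continuous
  let φ : ContDiffBump (0 : Evec n) := ⟨a / 2, a, by positivity, by linarith⟩
  set ρ : Evec n → ℝ := φ.normed volume with hρ
  have hρ0 : ∀ t, 0 ≤ ρ t := fun t => φ.nonneg_normed t
  have hρ1 : ∫ t, ρ t = 1 := φ.integral_normed
  have hρc : Continuous ρ := φ.continuous_normed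
  have hρs : HasCompactSupport ρ := φ.hasCompactSupport_normed
  have hρt : ∀ t, a < ‖t‖ → ρ t = 0 := by
    intro t ht
    apply Function.notMem_support.1
    rw [hρ, φ.support_normed_eq]
    simpa [φ] using ht.le
  have hint : ∀ g : Evec n → ℝ, Continuous g → Integrable (fun t => ρ t * g t) := by
    intro g hg
    exact (hρc.mul hg).integrable_of_hasCompactSupport hρs.mul_right
  have hle : ∀ (g h : Evec n → ℝ) (c : ℝ), Continuous g → Continuous h →
      (∀ t, ‖t‖ ≤ a → g t ≤ h t + c) → ∫ t, ρ t * g t ≤ (∫ t, ρ t * h t) + c := by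
    intro g h c hg hh hgh
    have : (∫ t, ρ t * h t) + c = ∫ t, ρ t * (h t + c) := by
      simp_rw [mul_add]
      rw [integral_add (hint h hh) (hint (fun _ => c) continuous_const), integral_mul_const, hρ1,
        one_mul]
    rw [this]
    refine integral_mono (hint g hg) (hint (fun t => h t + c) (by fun_prop)) fun t => ?_
    rcases le_or_gt ‖t‖ a with ht | ht
    · exact mul_le_mul_of_nonneg_left (hgh t ht) (hρ0 t)
    · simp [hρt t ht]
  have hcW : ∀ (x : Evec n) (r : ℝ), Continuous fun t : Evec n => W (x - r • t) := by
    intro x r; fun_prop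
  refine ⟨fun x => ∫ t, ρ t * W (x - ‖x‖ • t), ?_, ?_, ?_, ?_, ?_⟩
  · intro x hx
    have hconv : ContDiff ℝ 2 (MeasureTheory.convolution ρ W (ContinuousLinearMap.lsmul ℝ ℝ)
        volume) := hρs.contDiff_convolution_left _ φ.contDiff_normed hWc.locallyIntegrable
    have heq : (fun x => ∫ t, ρ t * W (x - ‖x‖ • t)) =ᶠ[𝓝 x] fun x => ‖x‖ *
        MeasureTheory.convolution ρ W (ContinuousLinearMap.lsmul ℝ ℝ) volume (‖x‖⁻¹ • x) := by
      filter_upwards [isOpen_ne.mem_nhds hx] with z hz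
      have hz' : 0 < ‖z‖ := norm_pos_iff.2 hz
      rw [convolution_def, ← integral_const_mul]
      refine integral_congr_ae (Eventually.of_forall fun t => ?_)
      have e : z - ‖z‖ • t = ‖z‖ • (‖z‖⁻¹ • z - t) := by
        rw [smul_sub, smul_smul, mul_inv_cancel₀ hz'.ne', one_smul]
      simp only [ContinuousLinearMap.lsmul_apply, smul_eq_mul]
      rw [e, hW _ hz']
      ring
    refine ContDiffAt.congr_of_eventuallyEq ?_ heq
    have hn : ContDiffAt ℝ 2 (fun x : Evec n => ‖x‖) x := contDiffAt_norm ℝ hx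
    exact hn.mul (hconv.contDiffAt.comp x
      ((hn.inv (norm_ne_zero_iff.2 hx)).smul contDiffAt_id))
  · intro s hs x
    simp only
    rw [← integral_const_mul]
    refine integral_congr_ae (Eventually.of_forall fun t => ?_)
    have e : s • x - ‖s • x‖ • t = s • (x - ‖x‖ • t) := by
      rw [norm_smul, Real.norm_of_nonneg hs.le, smul_sub, smul_smul]
    simp only
    rw [e, hW s hs]
    ring
  · intro x y
    refine hle _ _ _ (hcW _ _) (hcW _ _) fun t ht => ?_
    refine (hlip _ (y - ‖y‖ • t)).trans ?_
    have e : x - ‖x‖ • t - (y - ‖y‖ • t) = (x - y) - (‖x‖ - ‖y‖) • t := by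
      rw [sub_smul]; abel
    have h1 : ‖(‖x‖ - ‖y‖) • t‖ ≤ ‖x - y‖ * a := by
      rw [norm_smul, Real.norm_eq_abs]
      exact mul_le_mul (abs_norm_sub_norm_le x y) ht (norm_nonneg _) (norm_nonneg _)
    have h2 := norm_sub_le (x - y) ((‖x‖ - ‖y‖) • t)
    rw [← e] at h2
    have := mul_le_mul_of_nonneg_left (h2.trans (add_le_add_right h1 _)) hL0
    linarith
  · intro x
    have h := hle (fun _ => W x) (fun t => W (x - ‖x‖ • t)) (L * a * ‖x‖) continuous_const (hcW _ _)
      fun t ht => by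
        refine (hlip x (x - ‖x‖ • t)).trans ?_
        rw [sub_sub_cancel, norm_smul, norm_norm]
        have := mul_le_mul_of_nonneg_left ht (mul_nonneg hL0 (norm_nonneg x))
        linarith
    rw [integral_mul_const, hρ1, one_mul] at h
    linarith
  · intro x v hv
    refine hle _ _ _ (hcW _ _) (hcW _ _) fun t ht => ?_
    refine le_trans (hlip _ (x - ‖x‖ • t + v)) ?_
    have e : x + v - ‖x + v‖ • t - (x - ‖x‖ • t + v) = (‖x‖ - ‖x + v‖) • t := by
      rw [sub_smul]; abel
    have h1 : ‖(‖x‖ - ‖x + v‖) • t‖ ≤ ‖v‖ * a := by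
      rw [norm_smul, Real.norm_eq_abs]
      refine mul_le_mul ?_ ht (norm_nonneg _) (norm_nonneg _)
      have := abs_norm_sub_norm_le x (x + v)
      rwa [sub_add_cancel_left, norm_neg] at this
    rw [e]
    have h2 := mul_le_mul_of_nonneg_left h1 hL0
    have h3 := hv t ht
    linarith

/-! ### A half-space containing the directions of constraint -/

/-- A nonnegative combination of the `d_i` whose inner product with `n_j` is `≤ 0` for all `j` in its support is
trivial: subtracting a multiple of the combination `d^λ`, with `λ` the support, kills a coefficient
and keeps the hypothesis, so induction on the size of the support applies. -/
lemma no_dependence {nv dv : Fin N → Evec n} {dlam : Set (Fin N) → Evec n}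
    (hdlam : Cond21At nv dv dlam) (m : ℕ) : ∀ b : Fin N → ℝ, (∀ i, 0 ≤ b i) →
      (Finset.univ.filter fun i => b i ≠ 0).card = m →
      (∀ j, b j ≠ 0 → ⟪∑ i, b i • dv i, nv j⟫ ≤ 0) → ∀ i, b i = 0 := by
  induction m using Nat.strong_induction_on with
  | _ m ih =>
    intro b hb hcard hneg
    by_contra! hne
    obtain ⟨i0, hi0⟩ := hne
    set lam : Set (Fin N) := {i | b i ≠ 0} with hlam
    obtain ⟨⟨c, hc0, hc, hdc⟩, hpos⟩ := hdlam lam ⟨i0, hi0⟩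
    rw [hdc] at hpos
    -- `c` does not vanish on `lam`
    obtain ⟨i1, hi1⟩ : ∃ i, c i ≠ 0 := by
      by_contra! hall
      have := hpos i0 hi0
      simp [hall] at this
    have hi1b : b i1 ≠ 0 := by
      by_contra h
      exact hi1 (hc i1 fun h' => h' h)
    have hne : (Finset.univ.filter fun i => c i ≠ 0).Nonempty := ⟨i1, by simp [hi1]⟩
    obtain ⟨k, hk, hmin⟩ := Finset.exists_min_image _ (fun i => b i / c i) hne
    have hck : 0 < c k := lt_of_le_of_ne (hc0 k) (Ne.symm (Finset.mem_filter.1 hk).2)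
    have hkb : b k ≠ 0 := by
      by_contra h
      exact hck.ne' (hc k fun h' => h' h)
    have hbk : 0 < b k := lt_of_le_of_ne (hb k) (Ne.symm hkb)
    set s := b k / c k with hs
    have hs0 : 0 < s := div_pos hbk hck
    -- subtracting `s c` from `b` kills the coordinate `k` and keeps all others nonnegative
    have hb' : ∀ i, 0 ≤ b i - s * c i := by
      intro i
      rcases (hc0 i).eq_or_lt with h | h
      · rw [← h]; simpa using hb i
      · have := hmin i (by simp [h.ne'])
        rw [le_div_iff₀ h] at this
        linarith
    have hsum : ∀ j, ⟪∑ i, (b i - s * c i) • dv i, nv j⟫ =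
        ⟪∑ i, b i • dv i, nv j⟫ - s * ⟪∑ i, c i • dv i, nv j⟫ := by
      intro j
      have : ∑ i, (b i - s * c i) • dv i = ∑ i, b i • dv i - s • ∑ i, c i • dv i := by
        simp [sub_smul, Finset.smul_sum, smul_smul]
      rw [this, inner_sub_left, inner_smul_left]; simp
    have hlt : ∀ j, b j ≠ 0 → ⟪∑ i, (b i - s * c i) • dv i, nv j⟫ < 0 := by
      intro j hj
      rw [hsum]
      have := mul_pos hs0 (hpos j hj)
      have := hneg j hj
      linarith
    have hsupp : ∀ j, b j - s * c j ≠ 0 → b j ≠ 0 := by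
      intro j hj h
      rw [h, hc j fun h' => h' h] at hj
      simp at hj
    have hcardlt : (Finset.univ.filter fun i => b i - s * c i ≠ 0).card < m := by
      rw [← hcard]
      apply Finset.card_lt_card
      refine ⟨fun j hj => ?_, fun hsub => ?_⟩
      · simp only [Finset.mem_filter, Finset.mem_univ, true_and] at hj ⊢
        exact hsupp j hj
      · have := hsub (show k ∈ _ by simp [hkb])
        simp only [Finset.mem_filter, Finset.mem_univ, true_and] at this
        apply this
        rw [hs]; field_simp; simp
    have hz := ih _ hcardlt (fun i => b i - s * c i) hb' rfl fun j hj => (hlt j (hsupp j hj)).le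
    have := hlt i0 hi0
    simp [hz] at this

/-- By `no_dependence`, `0` is not in the convex hull of the `d_i`; separate. -/
lemma exists_dual {nv dv : Fin N → Evec n} {dlam : Set (Fin N) → Evec n}
    (hdlam : Cond21At nv dv dlam) : ∃ e : Evec n, ∀ i, 1 ≤ ⟪e, dv i⟫ := by
  have h0 : (0 : Evec n) ∉ convexHull ℝ (range dv) := by
    intro h
    rw [convexHull_range_eq_exists_affineCombination] at h
    obtain ⟨t, w, hw0, hw1, hw⟩ := h
    rw [t.affineCombination_eq_linear_combination _ _ hw1] at hw
    have hsum : ∑ i, (if i ∈ t then w i else 0) • dv i = 0 := by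
      rw [← hw]; simp [ite_smul, Finset.sum_ite_mem]
    have hz := no_dependence hdlam _ (fun i => if i ∈ t then w i else 0)
      (fun i => by split_ifs with hi; exacts [hw0 i hi, le_rfl]) rfl
      (fun j _ => by rw [hsum]; simp)
    have : t.sum w = 0 := Finset.sum_eq_zero fun i hi => by simpa [hi] using hz i
    linarith
  obtain ⟨g, u, hu0, hu⟩ := geometric_hahn_banach_point_closed (convex_convexHull ℝ (range dv))
    ((finite_range dv).isCompact_convexHull ℝ).isClosed h0
  rw [map_zero] at hu0
  refine ⟨u⁻¹ • (InnerProductSpace.toDual ℝ (Evec n)).symm g, fun i => ?_⟩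
  rw [inner_smul_left, InnerProductSpace.toDual_symm_apply]
  have := hu _ (subset_convexHull ℝ _ (mem_range_self i))
  simp only [conj_trivial]
  rw [inv_mul_eq_div, one_le_div hu0]
  exact this.le


/-! ### Derivatives of homogeneous functions -/

lemma fderiv_le_of_right {f : Evec n → ℝ} {x v : Evec n} (hf : DifferentiableAt ℝ f x) {m : ℝ}
    (h : ∀ᶠ s : ℝ in 𝓝[>] 0, f (x + s • v) ≤ f x + s * m) : fderiv ℝ f x v ≤ m := by
  have h1 : HasDerivAt (fun s : ℝ => f (x + s • v)) (fderiv ℝ f x v) 0 := by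
    have h2 : HasDerivAt (fun s : ℝ => x + s • v) v 0 := by
      simpa using ((hasDerivAt_id (0 : ℝ)).smul_const v).const_add x
    have h3 : HasFDerivAt f (fderiv ℝ f x) (x + (0 : ℝ) • v) := by simpa using hf.hasFDerivAt
    exact h3.comp_hasDerivAt 0 h2
  refine le_of_tendsto h1.tendsto_slope_zero_right ?_
  filter_upwards [h, self_mem_nhdsWithin] with s hs hs0
  have hs0 : 0 < s := hs0
  simp only [zero_add, zero_smul, add_zero, smul_eq_mul]
  rw [inv_mul_le_iff₀ hs0]
  linarith

lemma fderiv_homog {f : Evec n → ℝ} (hf : ∀ s : ℝ, 0 < s → ∀ x, f (s • x) = s * f x) {s : ℝ}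
    (hs : 0 < s) (x : Evec n) : fderiv ℝ f (s • x) = fderiv ℝ f x := by
  have h1 : (fun x => f (s • x)) = s • f := by
    funext x; simp [hf s hs]
  have h2 := congrFun (congrArg (fderiv ℝ) h1) x
  rw [fderiv_comp_smul, fderiv_const_smul_field] at h2
  exact smul_right_injective _ hs.ne' h2

lemma fderiv2_homog {f : Evec n → ℝ} (hf : ∀ s : ℝ, 0 < s → ∀ x, f (s • x) = s * f x) {s : ℝ}
    (hs : 0 < s) (x : Evec n) :
    fderiv ℝ (fderiv ℝ f) (s • x) = s⁻¹ • fderiv ℝ (fderiv ℝ f) x := by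
  have h1 : (fun x => fderiv ℝ f (s • x)) = fderiv ℝ f := by
    funext x; exact fderiv_homog hf hs x
  have h2 := congrFun (congrArg (fderiv ℝ) h1) x
  rw [fderiv_comp_smul] at h2
  rw [← h2, smul_smul, inv_mul_cancel₀ hs.ne', one_smul]

/-- The second derivative of a function homogeneous of degree one is homogeneous of degree `-1`,
so it vanishes at infinity. -/
lemma fderiv2_small {f : Evec n → ℝ} (hf : ∀ s : ℝ, 0 < s → ∀ x, f (s • x) = s * f x)
    (hcont : ContinuousOn (fderiv ℝ (fderiv ℝ f)) {0}ᶜ) {ε : ℝ} (hε : 0 < ε) :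
    ∃ M : ℝ, 0 < M ∧ ∀ x : Evec n, M ≤ ‖x‖ → ‖fderiv ℝ (fderiv ℝ f) x‖ ≤ ε := by
  have hsub : sphere (0 : Evec n) 1 ⊆ {0}ᶜ := by
    intro x hx h0
    rw [mem_singleton_iff.1 h0] at hx
    simp at hx
  obtain ⟨B, hB⟩ := (isCompact_sphere (0 : Evec n) 1).exists_bound_of_continuousOn
    (E := Evec n →L[ℝ] Evec n →L[ℝ] ℝ) (f := fderiv ℝ (fderiv ℝ f)) (hcont.mono hsub)
  refine ⟨(|B| + 1) / ε, by positivity, fun x hx => ?_⟩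
  have hx0 : 0 < ‖x‖ := lt_of_lt_of_le (by positivity) hx
  have e : x = ‖x‖ • (‖x‖⁻¹ • x) := by
    rw [smul_smul, mul_inv_cancel₀ hx0.ne', one_smul]
  have hb := hB (‖x‖⁻¹ • x) (by
    rw [mem_sphere_zero_iff_norm, norm_smul, norm_inv, norm_norm, inv_mul_cancel₀ hx0.ne'])
  rw [e, fderiv2_homog hf hx0]
  refine (ContinuousLinearMap.opNorm_smul_le _ _).trans ?_
  rw [norm_inv, norm_norm, inv_mul_le_iff₀ hx0]
  rw [div_le_iff₀ hε] at hx
  have := le_abs_self B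
  linarith

/-! ### The Lyapunov function -/

/-- There are homogeneous Lipschitz functions above the norm on `G` which do not increase in the
directions of `C`, nor in the directions of constraint, uniformly in a conic neighbourhood. -/
lemma exists_monotone {nv dv : Fin N → Evec n} (hnv : ∀ i, ‖nv i‖ = 1)
    {Γ : (ℝ → Evec n) → ℝ → Evec n} {ℓ : ℝ} (hℓ : 1 ≤ ℓ) (hΓ : Cond22 nv dv Γ ℓ) :
    ∃ (W : Evec n → ℝ) (L ε : ℝ), 0 ≤ L ∧ 0 < ε ∧
      (∀ x y, W x ≤ W y + L * ‖x - y‖) ∧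
      (∀ s : ℝ, 0 < s → ∀ x, W (s • x) = s * W x) ∧
      (∀ x ∈ Gset nv, ‖x‖ ≤ W x) ∧
      (∀ x0 ∈ Gset nv, ∀ v, (v ∈ Cset dv ∨ v ∈ coneGen dv (inIdx nv x0)) → ‖v‖ ≤ ε * ‖x0‖ →
        ∀ x, ‖x - x0‖ ≤ ε * ‖x0‖ → W (x + v) ≤ W x) := by
  set ε0 : ℝ := 1 / (4 * ℓ) with hε0
  have hε0pos : 0 < ε0 := by positivity
  have hε01 : ε0 ≤ 1 := by
    rw [hε0, div_le_one (by positivity)]; linarith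
  have hK0 : 0 ≤ 2 * ℓ := by linarith
  have hK : ∀ x p k, PTraj nv dv ε0 x p → ‖p k‖ ≤ 2 * ℓ * ‖x‖ :=
    fun x p k hp => ptraj_bound hnv hℓ hΓ hp k
  have hVK := reachSup_le hK0 hK
  set ε : ℝ := ε0 / 8 with hε
  have hεpos : 0 < ε := by positivity
  have hL : 2 * ℓ ≤ 2 * ℓ + 2 * ℓ / ε := by
    have : 0 ≤ 2 * ℓ / ε := by positivity
    linarith
  refine ⟨supConv (reachSup nv dv ε0) (2 * ℓ + 2 * ℓ / ε), 2 * ℓ + 2 * ℓ / ε, ε, by linarith, hεpos,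
    supConv_lip hK0 hVK hL, fun s hs x => supConv_smul hK0 hVK hL
      (fun s hs x => reachSup_smul hK hs x) hs x, fun x hx => ?_, ?_⟩
  · exact (norm_le_reachSup hK ⟨x, hx, by simp; positivity⟩).trans (self_le_supConv hK0 hVK hL x)
  intro x0 hx0 v hv hvn x hx
  refine supConv_mono hK0 reachSup_nonneg hVK hεpos (by linarith) (fun y hy1 hy2 => ?_) hvn hx
  have hclose : ∀ z : Evec n, ‖z - x0‖ ≤ 4 * ε * ‖x0‖ → ‖x0 - z‖ ≤ ε0 * ‖z‖ := by
    intro z hz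
    rw [norm_sub_rev]
    have h1 : ‖x0‖ ≤ ‖z‖ + ‖z - x0‖ := by
      have := norm_sub_le z (z - x0)
      rwa [sub_sub_cancel] at this
    have h2 : 4 * ε * ‖x0‖ ≤ 1 / 2 * ‖x0‖ :=
      mul_le_mul_of_nonneg_right (by linarith) (norm_nonneg _)
    have h3 : ‖x0‖ ≤ 2 * ‖z‖ := by linarith
    have h4 : 4 * ε * ‖x0‖ ≤ 4 * ε * (2 * ‖z‖) := mul_le_mul_of_nonneg_left h3 (by positivity)
    rw [hε] at h4 hz
    linarith
  refine reachSup_step hK ⟨x0, hx0, hclose y hy1⟩ ⟨x0, hx0, hclose _ hy2, ?_⟩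
  rcases hv with hv | hv
  · exact ⟨v, hv, 0, coneGen_zero _ _, by simp⟩
  · exact ⟨0, coneGen_zero _ _, v, hv, by simp⟩

lemma add_mem_Cset {dv : Fin N → Evec n} {C1 : Set (Evec n)} (hC1 : C1 ⊆ interior (Cset dv))
    {δ : ℝ} (hδ : 0 < δ) (hδd : ∀ x ∈ C1, δ ≤ infDist x (frontier (Cset dv))) {r w : Evec n}
    (hr : r ∈ C1) (hw : ‖w‖ < δ) : r + w ∈ Cset dv := by
  by_contra hcon
  have hmem : r + w ∈ ball r δ := by simpa [mem_ball, dist_eq_norm] using hw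
  have hnf : ∀ z ∈ ball r δ, z ∉ frontier (Cset dv) := by
    intro z hz hz2
    have h1 := (hδd r hr).trans (infDist_le_dist_of_mem hz2)
    rw [mem_ball, dist_comm] at hz
    linarith
  -- the ball is connected and misses the frontier, hence lies on one side of it
  have hsub : ball r δ ⊆ interior (Cset dv) ∪ (closure (Cset dv))ᶜ := by
    intro z hz
    by_contra h
    simp only [mem_union, mem_compl_iff, not_or, not_not] at h
    exact hnf z hz ⟨h.2, h.1⟩
  have hout : r + w ∈ (closure (Cset dv))ᶜ := by
    rcases hsub hmem with h | h
    · exact absurd (interior_subset h) hcon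
    · exact h
  obtain ⟨z, -, hz1, hz2⟩ := (convex_ball r δ).isPreconnected _ _ isOpen_interior
    isClosed_closure.isOpen_compl hsub ⟨r, mem_ball_self hδ, hC1 hr⟩ ⟨_, hmem, hout⟩
  exact hz2 (subset_closure (interior_subset hz1))

theorem stmt2
    {n N : ℕ} (hn : 1 ≤ n) (hNn : n ≤ N)
    (nv dv : Fin N → Evec n)
    (hnv : ∀ i, ‖nv i‖ = 1) (hdv : ∀ i, ‖dv i‖ = 1)
    (hdn : ∀ i, 0 < ⟪dv i, nv i⟫)
    (hvertex : ProperVertex nv)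
    (dlam : Set (Fin N) → Evec n) (hdlam : Cond21At nv dv dlam)
    (Γ : (ℝ → Evec n) → ℝ → Evec n) (ℓ : ℝ) (hℓ : 1 ≤ ℓ) (hΓ : Cond22 nv dv Γ ℓ)
    (C1 : Set (Evec n)) (hC1c : IsCompact C1) (hC1 : C1 ⊆ interior (Cset dv))
    (δ : ℝ) (hδ : 0 < δ) (hδd : ∀ x ∈ C1, δ ≤ infDist x (frontier (Cset dv)))
    :
    ∃ (f : Evec n → ℝ) (f' : Evec n → Evec n →L[ℝ] ℝ)
      (f'' : Evec n → Evec n →L[ℝ] Evec n →L[ℝ] ℝ),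
      (∀ x ∈ Gset nv \ {0}, HasFDerivWithinAt f (f' x) (Gset nv \ {0}) x) ∧
      (∀ x ∈ Gset nv \ {0}, HasFDerivWithinAt f' (f'' x) (Gset nv \ {0}) x) ∧
      ContinuousOn f' (Gset nv \ {0}) ∧ ContinuousOn f'' (Gset nv \ {0}) ∧
      (∀ N' : ℝ, 0 < N' → ∃ M : ℝ, 0 < M ∧ ∀ x ∈ Gset nv, M ≤ ‖x‖ → N' ≤ f x) ∧
      (∀ ε : ℝ, 0 < ε → ∃ M : ℝ, 0 < M ∧ ∀ x ∈ Gset nv, M ≤ ‖x‖ → ‖f'' x‖ ≤ ε) ∧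
      (∃ c : ℝ, 0 < c ∧
        (∀ r0 ∈ C1, ∀ x ∈ Gset nv, x ≠ 0 → f' x r0 ≤ -c) ∧
        (∀ x ∈ frontier (Gset nv), x ≠ 0 → ∀ d ∈ dDir nv dv x, f' x d ≤ -c)) ∧
      (∃ L : ℝ, 0 < L ∧ ∀ x ∈ Gset nv, ‖f' x‖ ≤ L) ∧
      (∀ s : ℝ, 0 < s → ∀ x ∈ Gset nv, f (s • x) = s * f x) := by
  obtain ⟨e, he⟩ := exists_dual hdlam
  obtain ⟨W, L, ε, hL0, hε, hWlip, hWs, hWn, hWm⟩ := exists_monotone hnv hℓ hΓ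
  obtain ⟨R, hR0, hR⟩ : ∃ R : ℝ, 0 < R ∧ ∀ r ∈ C1, ‖r‖ ≤ R := by
    obtain ⟨R, hR⟩ := hC1c.isBounded.exists_norm_le
    exact ⟨|R| + 1, by positivity, fun r hr => (hR r hr).trans (by have := le_abs_self R; linarith)⟩
  -- `κ` is small against `δ`, then the mollification width `a` is small against `δ` and `κ`
  obtain ⟨κ, hκ, hκ1, hκ2⟩ : ∃ κ : ℝ, 0 < κ ∧ κ * ‖e‖ ≤ 1 / 4 ∧ κ * ‖e‖ * R ≤ δ / 16 := by
    have hp : 0 < ‖e‖ + 1 := by positivity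
    refine ⟨min (1 / 4) (δ / (16 * R)) / (‖e‖ + 1), by positivity, ?_, ?_⟩
    · have h1 : min (1 / 4) (δ / (16 * R)) / (‖e‖ + 1) * ‖e‖ ≤ min (1 / 4) (δ / (16 * R)) := by
        rw [div_mul_eq_mul_div, div_le_iff₀ hp]
        have : 0 ≤ min (1 / 4) (δ / (16 * R)) := by positivity
        nlinarith
      exact h1.trans (min_le_left _ _)
    · have h1 : min (1 / 4) (δ / (16 * R)) / (‖e‖ + 1) * ‖e‖ ≤ min (1 / 4) (δ / (16 * R)) := by
        rw [div_mul_eq_mul_div, div_le_iff₀ hp]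
        have : 0 ≤ min (1 / 4) (δ / (16 * R)) := by positivity
        nlinarith
      have h2 := mul_le_mul_of_nonneg_right (h1.trans (min_le_right _ _)) hR0.le
      refine h2.trans (le_of_eq ?_)
      field_simp
  obtain ⟨a, ha, haε, ha1, ha2, ha3⟩ : ∃ a : ℝ, 0 < a ∧ a ≤ ε ∧ L * a ≤ 1 / 2 ∧
      L * a * (R + δ) ≤ δ / 16 ∧ L * a ≤ κ / 2 := by
    have hp : 0 < L + 1 := by positivity
    set b := min (1 / 2) (min (δ / (16 * (R + δ))) (κ / 2)) with hb
    have hb0 : 0 < b := by positivity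
    have hLa : L * min ε (b / (L + 1)) ≤ b := by
      calc L * min ε (b / (L + 1)) ≤ L * (b / (L + 1)) :=
            mul_le_mul_of_nonneg_left (min_le_right _ _) hL0
        _ ≤ b := by
          rw [← mul_div_assoc, div_le_iff₀ hp]; nlinarith
    refine ⟨min ε (b / (L + 1)), by positivity, min_le_left _ _, hLa.trans (min_le_left _ _), ?_,
      hLa.trans ((min_le_right _ _).trans (min_le_right _ _))⟩
    have h2 := mul_le_mul_of_nonneg_right
      (hLa.trans ((min_le_right _ _).trans (min_le_left _ _))) (show 0 ≤ R + δ by positivity)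
    refine h2.trans (le_of_eq ?_)
    field_simp
  obtain ⟨F, hFc, hFs, hFlip, hFW, hFm⟩ := exists_mollified hL0 hWlip hWs ha
  have hFlow : ∀ x ∈ Gset nv, ‖x‖ / 2 ≤ F x := by
    intro x hx
    have h1 := hFW x
    have h2 := hWn x hx
    have h3 := mul_le_mul_of_nonneg_right ha1 (norm_nonneg x)
    linarith
  have hFd : ∀ x : Evec n, x ≠ 0 → DifferentiableAt ℝ F x := fun x hx =>
    (hFc x hx).differentiableAt (by norm_num)
  have hdir : ∀ x ∈ Gset nv, x ≠ 0 → ∀ v, (v ∈ Cset dv ∨ v ∈ coneGen dv (inIdx nv x)) →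
      fderiv ℝ F x v ≤ L * a * ‖v‖ := by
    intro x hx hx0 v hv
    have hx0' : 0 < ‖x‖ := norm_pos_iff.2 hx0
    apply fderiv_le_of_right (hFd x hx0)
    have hsm : ∀ᶠ s : ℝ in 𝓝[>] 0, ‖s • v‖ < ε * ‖x‖ := by
      have hc : Continuous fun s : ℝ => ‖s • v‖ := by fun_prop
      have h0 := hc.tendsto 0
      simp only [zero_smul, norm_zero] at h0
      exact (h0.mono_left nhdsWithin_le_nhds).eventually (gt_mem_nhds (by positivity))
    filter_upwards [hsm, self_mem_nhdsWithin] with s hs hs0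
    have hs0 : 0 < s := hs0
    have hmem : s • v ∈ Cset dv ∨ s • v ∈ coneGen dv (inIdx nv x) :=
      hv.imp (fun h => coneGen_smul h hs0.le) (fun h => coneGen_smul h hs0.le)
    have h := hFm x (s • v) fun t ht => by
      refine hWm x hx _ hmem hs.le _ ?_
      rw [sub_sub_cancel_left, norm_neg, norm_smul, norm_norm, mul_comm]
      exact mul_le_mul_of_nonneg_right (ht.trans haε) hx0'.le
    rw [norm_smul, Real.norm_of_nonneg hs0.le] at h
    linarith
  have hrad : ∀ x ∈ Gset nv, x ≠ 0 → ‖x‖ / 2 ≤ fderiv ℝ F x x := by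
    intro x hx hx0
    have h : fderiv ℝ F x (-x) ≤ -F x := by
      apply fderiv_le_of_right (hFd x hx0)
      filter_upwards [Ioo_mem_nhdsGT (show (0 : ℝ) < 1 by norm_num)] with s hs
      have e1 : x + s • -x = (1 - s) • x := by rw [sub_smul, one_smul, smul_neg, sub_eq_add_neg]
      rw [e1, hFs _ (by linarith [hs.2])]
      linarith
    rw [map_neg] at h
    have := hFlow x hx
    linarith
  set f : Evec n → ℝ := fun x => F x - κ * ⟪e, x⟫ with hf
  have hfc : ∀ x, x ≠ 0 → ContDiffAt ℝ 2 f x := fun x hx =>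
    (hFc x hx).sub (contDiffAt_const.mul (contDiffAt_const.inner ℝ contDiffAt_id))
  have hfs : ∀ s : ℝ, 0 < s → ∀ x, f (s • x) = s * f x := by
    intro s hs x
    simp only [hf]
    rw [hFs s hs, inner_smul_right]; ring
  have hfd : ∀ x, x ≠ 0 → ∀ v, fderiv ℝ f x v = fderiv ℝ F x v - κ * ⟪e, v⟫ := by
    intro x hx v
    have h1 : HasFDerivAt f (fderiv ℝ F x - κ • innerSL ℝ e) x :=
      (hFd x hx).hasFDerivAt.sub ((innerSL ℝ e).hasFDerivAt.const_mul κ)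
    rw [h1.fderiv]; simp
  have hein : ∀ v : Evec n, |κ * ⟪e, v⟫| ≤ κ * ‖e‖ * ‖v‖ := by
    intro v
    rw [abs_mul, abs_of_pos hκ, mul_assoc]
    exact mul_le_mul_of_nonneg_left (abs_real_inner_le_norm e v) hκ.le
  have hfc' : ∀ x, x ≠ 0 → ContDiffAt ℝ 1 (fderiv ℝ f) x := fun x hx =>
    (hfc x hx).fderiv_right (by norm_num)
  have hfc'' : ∀ x, x ≠ 0 → ContDiffAt ℝ 0 (fderiv ℝ (fderiv ℝ f)) x := fun x hx =>
    (hfc' x hx).fderiv_right (by norm_num)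
  have hcont2 : ContinuousOn (fderiv ℝ (fderiv ℝ f)) {0}ᶜ := fun x hx =>
    (hfc'' x hx).continuousAt.continuousWithinAt
  refine ⟨f, fderiv ℝ f, fderiv ℝ (fderiv ℝ f), ?_, ?_, ?_, ?_, ?_, ?_, ?_, ?_, ?_⟩
  · exact fun x hx => ((hfc x hx.2).differentiableAt (by norm_num)).hasFDerivAt.hasFDerivWithinAt
  · exact fun x hx => ((hfc' x hx.2).differentiableAt (by norm_num)).hasFDerivAt.hasFDerivWithinAt
  · exact fun x hx => (hfc' x hx.2).continuousAt.continuousWithinAt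
  · exact hcont2.mono fun x hx => hx.2
  · intro N' hN'
    refine ⟨4 * N', by linarith, fun x hx hxn => ?_⟩
    have h1 := hFlow x hx
    have h2 := (le_abs_self _).trans (hein x)
    have h3 := mul_le_mul_of_nonneg_right hκ1 (norm_nonneg x)
    simp only [hf]
    linarith
  · intro ε' hε'
    obtain ⟨M, hM, h⟩ := fderiv2_small hfs hcont2 hε'
    exact ⟨M, hM, fun x _ hx => h x hx⟩
  · refine ⟨min (δ / 8) (κ / 2), by positivity, fun r hr x hx hx0 => ?_, fun x hx hx0 d hd => ?_⟩
    · refine le_trans ?_ (neg_le_neg (min_le_left _ _))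
      have hxn : 0 < ‖x‖ := norm_pos_iff.2 hx0
      -- the inflated drift `r + w`, with `w` radial, still lies in `C`
      set w : Evec n := (δ / 2 * ‖x‖⁻¹) • x with hw
      have hwn : ‖w‖ = δ / 2 := by
        rw [hw, norm_smul, norm_mul, norm_inv, norm_norm, Real.norm_of_nonneg (by linarith),
          mul_assoc, inv_mul_cancel₀ hxn.ne', mul_one]
      have h1 := hdir x hx hx0 (r + w)
        (Or.inl (add_mem_Cset hC1 hδ hδd hr (by rw [hwn]; linarith)))
      rw [map_add, hw, map_smul, smul_eq_mul, ← hw] at h1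
      have h2 : ‖r + w‖ ≤ R + δ := by
        have := norm_add_le r w
        have := hR r hr
        linarith
      have h3 := mul_le_mul_of_nonneg_left h2 (mul_nonneg hL0 ha.le)
      have h4 := mul_le_mul_of_nonneg_left (hrad x hx hx0)
        (show 0 ≤ δ / 2 * ‖x‖⁻¹ by positivity)
      have h5 : δ / 2 * ‖x‖⁻¹ * (‖x‖ / 2) = δ / 4 := by field_simp; norm_num
      have h6 := (neg_le_abs _).trans (hein r)
      have h7 := mul_le_mul_of_nonneg_left (hR r hr) (show 0 ≤ κ * ‖e‖ by positivity)
      rw [hfd x hx0]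
      linarith
    · refine le_trans ?_ (neg_le_neg (min_le_right _ _))
      have hclosed : IsClosed (Gset nv) := by
        have : Gset nv = ⋂ i, {x | 0 ≤ ⟪x, nv i⟫} := by ext x; simp [Gset]
        rw [this]
        exact isClosed_iInter fun i => isClosed_le continuous_const (by fun_prop)
      have hxG : x ∈ Gset nv := hclosed.frontier_subset hx
      have hd1 : ‖d‖ = 1 := mem_sphere_zero_iff_norm.1 hd.2
      have h1 := hdir x hxG hx0 d (Or.inr hd.1)
      rw [hd1] at h1
      obtain ⟨c, hc0, -, hdc⟩ := hd.1
      have h2 : 1 ≤ ∑ i, c i := by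
        rw [← hd1, hdc]
        refine (norm_sum_le _ _).trans (Finset.sum_le_sum fun i _ => ?_)
        rw [norm_smul, hdv, mul_one, Real.norm_of_nonneg (hc0 i)]
      have h3 : ∑ i, c i ≤ ⟪e, d⟫ := by
        rw [hdc, inner_sum]
        refine Finset.sum_le_sum fun i _ => ?_
        rw [inner_smul_right]
        exact le_mul_of_one_le_right (hc0 i) (he i)
      have h4 := mul_le_mul_of_nonneg_left (h2.trans h3) hκ.le
      rw [hfd x hx0]
      linarith
  · have hflip : LipschitzWith (Real.toNNReal (L * (1 + a) + κ * ‖e‖)) f := by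
      apply LipschitzWith.of_le_add_mul
      intro x y
      rw [Real.coe_toNNReal _ (by positivity), dist_eq_norm]
      have h1 := hFlip x y
      have h2 := (neg_le_abs _).trans (hein (x - y))
      rw [inner_sub_right] at h2
      simp only [hf]
      linarith
    refine ⟨L * (1 + a) + κ * ‖e‖ + 1, by positivity, fun x _ => ?_⟩
    have h := norm_fderiv_le_of_lipschitz ℝ (x₀ := x) hflip
    rw [Real.coe_toNNReal _ (by positivity)] at h
    linarith
  · exact fun s hs x _ => hfs s hs x

end
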